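/- arXiv:1303.3740 — 4 statements merged into one kernel-verified Lean document; each statement's English description precedes it below -/
import Mathlib

section
/- Let Γ0, Γ1 be complex d×d matrices, and let (λ₁,u₁), …, (λ_d,u_d) be d generalized eigenpairs of the palindromic quadratic eigenvalue problem, i.e. (λᵢ² Γ1 + λᵢ Γ0 + Γ1ᵀ)uᵢ = 0 with uᵢ ≠ 0 for each i. Let U be the d×d matrix whose i-th column is uᵢ and let D be the diagonal matrix with diagonal entries λ₁,…,λ_d, and assume U is invertible. Then B := (Uᵀ)⁻¹ D Uᵀ satisfies the palindromic matrix equation Γ1ᵀ + Γ0 Bᵀ + Γ1 (Bᵀ)² = 0. -/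
/-!
The matrix `Bᵀ = U D U⁻¹` satisfies `Bᵀ U = U D`, so multiplying the left-hand side of the
palindromic matrix equation by `U` on the right gives `Γ1ᵀ U + Γ0 U D + Γ1 U D²`. Its `i`-th
column is the quadratic eigenvalue equation for `(lam i, u i)`, hence zero; cancelling the
invertible `U` gives the claim.
-/

open Matrix

/-- If `(λᵢ, uᵢ)`, `i = 1, …, d`, are generalized eigenpairs of the palindromic quadratic
eigenvalue problem `(λ² Γ1 + λ Γ0 + Γ1ᵀ) u = 0` and the matrix `U` of eigenvectors is
invertible, then `B = (Uᵀ)⁻¹ D Uᵀ` solves the palindromic matrix equation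
`Γ1ᵀ + Γ0 Bᵀ + Γ1 (Bᵀ)² = 0`. -/
theorem pme_solution_from_gen_eigenpairs (d : ℕ) (Γ0 Γ1 : Matrix (Fin d) (Fin d) ℂ)
    (lam : Fin d → ℂ) (u : Fin d → Fin d → ℂ)
    (hu : ∀ i, u i ≠ 0)
    (heig : ∀ i, ((lam i) ^ 2 • Γ1 + (lam i) • Γ0 + Γ1ᵀ).mulVec (u i) = 0)
    (U : Matrix (Fin d) (Fin d) ℂ) (hU : U = Matrix.of fun r i => u i r)
    (hUinv : IsUnit U.det)
    (B : Matrix (Fin d) (Fin d) ℂ) (hB : B = Uᵀ⁻¹ * Matrix.diagonal lam * Uᵀ) :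
    Γ1ᵀ + Γ0 * Bᵀ + Γ1 * Bᵀ ^ 2 = 0 := by
  have hBT : Bᵀ = U * diagonal lam * U⁻¹ := by
    rw [hB, transpose_mul, transpose_mul, transpose_transpose, diagonal_transpose,
      transpose_nonsing_inv, transpose_transpose, mul_assoc]
  have hBU : Bᵀ * U = U * diagonal lam := by
    rw [hBT, mul_assoc, nonsing_inv_mul U hUinv, mul_one]
  have hBBU : Bᵀ ^ 2 * U = U * diagonal lam * diagonal lam := by
    rw [pow_two, mul_assoc, hBU, ← mul_assoc, hBU]
  -- The `i`-th column of this identity is the eigenpair equation for `(lam i, u i)`.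
  have key : Γ1ᵀ * U + Γ0 * U * diagonal lam + Γ1 * U * diagonal lam * diagonal lam = 0 := by
    ext r i
    have h := congrFun (heig i) r
    have hcol (M : Matrix (Fin d) (Fin d) ℂ) : (M * U) r i = (M *ᵥ u i) r := by
      rw [hU]; rfl
    simp only [add_mulVec, smul_mulVec, Pi.add_apply, Pi.smul_apply, smul_eq_mul,
      Pi.zero_apply] at h
    simp only [Matrix.add_apply, mul_diagonal, hcol, Matrix.zero_apply]
    linear_combination h
  have hmul : (Γ1ᵀ + Γ0 * Bᵀ + Γ1 * Bᵀ ^ 2) * U = 0 := by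
    rw [add_mul, add_mul, mul_assoc Γ0, mul_assoc Γ1, hBU, hBBU]
    simpa only [mul_assoc] using key
  rw [← mul_one (Γ1ᵀ + Γ0 * Bᵀ + Γ1 * Bᵀ ^ 2), ← mul_nonsing_inv U hUinv, ← mul_assoc, hmul,
    zero_mul]
end

section
/- Let Γ0, Γ1 be complex d×d matrices and let B be a solution of the palindromic matrix equation Γ1ᵀ + Γ0 Bᵀ + Γ1 (Bᵀ)² = 0 such that Bᵀ = U D U⁻¹ for some invertible matrix U and diagonal matrix D with diagonal entries λ₁,…,λ_d. Then for each i, the pair (λᵢ, uᵢ), where uᵢ is the i-th column of U, is a generalized eigenpair of the palindromic quadratic eigenvalue problem, i.e. (λᵢ² Γ1 + λᵢ Γ0 + Γ1ᵀ)uᵢ = 0 and uᵢ ≠ 0. -/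
/-!
From `Bᵀ U = U D`, each column `uᵢ` of `U` satisfies `Bᵀ uᵢ = λᵢ uᵢ`. Applying the matrix
equation to `uᵢ` therefore replaces `Bᵀ` by the scalar `λᵢ`, which is the quadratic eigenvalue
equation. A zero column would force `det U = 0`.
-/

open Matrix

/-- If `B` solves the palindromic matrix equation `Γ1ᵀ + Γ0 Bᵀ + Γ1 (Bᵀ)² = 0` and
`Bᵀ = U D U⁻¹` with `U` invertible and `D = diagonal (λ₁, …, λ_d)`, then each pair
`(λᵢ, uᵢ)`, where `uᵢ` is the `i`-th column of `U`, is a generalized eigenpair of the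
palindromic quadratic eigenvalue problem. -/
theorem gen_eigenpairs_from_pme_solution (d : ℕ) (Γ0 Γ1 : Matrix (Fin d) (Fin d) ℂ)
    (B U : Matrix (Fin d) (Fin d) ℂ) (lam : Fin d → ℂ)
    (hpme : Γ1ᵀ + Γ0 * Bᵀ + Γ1 * Bᵀ ^ 2 = 0)
    (hUinv : IsUnit U.det)
    (hB : Bᵀ = U * Matrix.diagonal lam * U⁻¹) :
    ∀ i : Fin d, (fun r => U r i) ≠ 0 ∧
      ((lam i) ^ 2 • Γ1 + (lam i) • Γ0 + Γ1ᵀ).mulVec (fun r => U r i) = 0 := by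
  intro i
  have hBU : Bᵀ * U = U * Matrix.diagonal lam := by
    rw [hB, Matrix.mul_assoc, Matrix.nonsing_inv_mul U hUinv, Matrix.mul_one]
  -- Comparing `i`-th columns: `uᵢ` is an eigenvector of `Bᵀ` for `λᵢ`.
  have hcol : Bᵀ *ᵥ (fun r => U r i) = lam i • (fun r => U r i) := by
    ext r
    have h := congrFun (congrFun hBU r) i
    rw [Matrix.mul_diagonal, mul_comm] at h
    exact h
  refine ⟨fun h0 => ?_, ?_⟩
  · exact hUinv.ne_zero (Matrix.det_eq_zero_of_column_eq_zero i (congrFun h0))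
  · have h := congrArg (fun M => M *ᵥ (fun r => U r i)) hpme
    simp only [pow_two, Matrix.add_mulVec, ← Matrix.mulVec_mulVec, hcol, Matrix.mulVec_smul,
      Matrix.zero_mulVec, smul_smul] at h
    simp only [pow_two, Matrix.add_mulVec, Matrix.smul_mulVec]
    rw [← h]
    abel
end

section
/- Let Γ0 and Γ1 be real d×d matrices with Γ0 symmetric and Γ1 invertible, and let P be the 2d×2d block matrix with blocks [[0, I], [−Γ1⁻¹Γ1ᵀ, −Γ1⁻¹Γ0]] (viewed as a complex matrix). If λ is a complex eigenvalue of P, then λ ≠ 0 and 1/λ is also an eigenvalue of P. -/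
open Matrix

/-!
Writing `w = (u, v)`, the equation `P w = μ w` says `v = μ u` and `Q(μ) u = 0`, where
`Q(μ) = μ² Γ1 + μ Γ0 + Γ1ᵀ`. Hence `μ` is an eigenvalue of `P` iff `det Q(μ) = 0`
(`companion_eigen_iff`). Since `det Q(0) = det Γ1ᵀ ≠ 0`, zero is not an eigenvalue. Symmetry of
`Γ0` gives `Q(μ)ᵀ = μ² Q(1/μ)` for `μ ≠ 0`, so `det Q(μ)` and `det Q(1/μ)` vanish together.
-/

/-- The eigenvalues of the companion matrix are the roots of the determinant of the associated
quadratic matrix polynomial. -/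
lemma companion_eigen_iff {n : Type*} [Fintype n] [DecidableEq n] (A B : Matrix n n ℂ)
    (hA : IsUnit A.det) (μ : ℂ) :
    (∃ w : n ⊕ n → ℂ, w ≠ 0 ∧
      (Matrix.fromBlocks 0 1 (-(A⁻¹ * Aᵀ)) (-(A⁻¹ * B))).mulVec w = μ • w) ↔
    (μ ^ 2 • A + μ • B + Aᵀ).det = 0 := by
  -- Both sides of the second block row may be multiplied by the invertible matrix `A`.
  have key : ∀ u : n → ℂ, -(A⁻¹ * Aᵀ) *ᵥ u + -(A⁻¹ * B) *ᵥ (μ • u) = μ • μ • u ↔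
      (μ ^ 2 • A + μ • B + Aᵀ) *ᵥ u = 0 := by
    intro u
    have hinj : Function.Injective A.mulVec :=
      Matrix.mulVec_injective_iff_isUnit.2 ((Matrix.isUnit_iff_isUnit_det A).2 hA)
    rw [← hinj.eq_iff]
    have h1 : A *ᵥ (-(A⁻¹ * Aᵀ) *ᵥ u + -(A⁻¹ * B) *ᵥ (μ • u)) =
        -(Aᵀ *ᵥ u) - μ • (B *ᵥ u) := by
      rw [mulVec_add, mulVec_mulVec, mulVec_mulVec, mul_neg, mul_neg,
        Matrix.mul_nonsing_inv_cancel_left _ _ hA, Matrix.mul_nonsing_inv_cancel_left _ _ hA,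
        neg_mulVec, neg_mulVec, mulVec_smul, sub_eq_add_neg]
    have h2 : (μ ^ 2 • A + μ • B + Aᵀ) *ᵥ u =
        A *ᵥ (μ • μ • u) - (-(Aᵀ *ᵥ u) - μ • (B *ᵥ u)) := by
      simp only [add_mulVec, smul_mulVec, mulVec_smul, smul_smul, pow_two]
      abel
    rw [h1, h2, sub_eq_zero, eq_comm]
  rw [← Matrix.exists_mulVec_eq_zero_iff]
  constructor
  · rintro ⟨w, hw, h⟩
    obtain ⟨u, v, rfl⟩ : ∃ u v, w = Sum.elim u v :=
      ⟨w ∘ Sum.inl, w ∘ Sum.inr, (Sum.elim_comp_inl_inr w).symm⟩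
    rw [fromBlocks_mulVec, Sum.elim_comp_inl, Sum.elim_comp_inr, zero_mulVec, one_mulVec,
      zero_add] at h
    have hv : v = μ • u := funext fun i => congrFun h (Sum.inl i)
    subst hv
    refine ⟨u, ?_, (key u).1 (funext fun i => congrFun h (Sum.inr i))⟩
    rintro rfl
    exact hw (by ext (i | i) <;> simp)
  · rintro ⟨u, hu, h⟩
    refine ⟨Sum.elim u (μ • u), fun h0 => hu (funext fun i => congrFun h0 (Sum.inl i)), ?_⟩
    rw [fromBlocks_mulVec, Sum.elim_comp_inl, Sum.elim_comp_inr, (key u).2 h]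
    ext (i | i) <;> simp

/-- For real `Γ0, Γ1` with `Γ0` symmetric and `Γ1` invertible, the complex eigenvalues of
the companion matrix `P = [[0, I], [−Γ1⁻¹Γ1ᵀ, −Γ1⁻¹Γ0]]` are nonzero and come in pairs
`(λ, 1/λ)`. -/
theorem companion_eigenvalue_pairing (d : ℕ) (Γ0 Γ1 : Matrix (Fin d) (Fin d) ℝ)
    (hΓ0 : Γ0.IsSymm) (hΓ1 : IsUnit Γ1.det)
    (P : Matrix (Fin d ⊕ Fin d) (Fin d ⊕ Fin d) ℂ)
    (hP : P = Matrix.fromBlocks 0 1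
      (-((Γ1.map Complex.ofReal)⁻¹ * (Γ1.map Complex.ofReal)ᵀ))
      (-((Γ1.map Complex.ofReal)⁻¹ * (Γ0.map Complex.ofReal))))
    (lam : ℂ) (w : Fin d ⊕ Fin d → ℂ) (hw : w ≠ 0) (heig : P.mulVec w = lam • w) :
    lam ≠ 0 ∧ ∃ w' : Fin d ⊕ Fin d → ℂ, w' ≠ 0 ∧ P.mulVec w' = (1 / lam) • w' := by
  subst hP
  set A := Γ1.map Complex.ofReal with hAdef
  set B := Γ0.map Complex.ofReal with hBdef
  have hA : IsUnit A.det := by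
    have h : A.det = Complex.ofRealHom Γ1.det := (RingHom.map_det Complex.ofRealHom Γ1).symm
    rw [h]
    exact hΓ1.map _
  have hB : Bᵀ = B := (hΓ0.map Complex.ofReal).eq
  have hdet := (companion_eigen_iff A B hA lam).1 ⟨w, hw, heig⟩
  have hlam : lam ≠ 0 := by
    rintro rfl
    exact hA.ne_zero (by simpa using hdet)
  refine ⟨hlam, (companion_eigen_iff A B hA (1 / lam)).2 ?_⟩
  have hQ : (1 / lam) ^ 2 • A + (1 / lam) • B + Aᵀ =
      (1 / lam) ^ 2 • (lam ^ 2 • A + lam • B + Aᵀ)ᵀ := by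
    simp only [transpose_add, transpose_smul, transpose_transpose, hB, smul_add, smul_smul]
    have e1 : (1 / lam) ^ 2 * lam ^ 2 = 1 := by field_simp
    have e2 : (1 / lam) ^ 2 * lam = 1 / lam := by field_simp
    rw [e1, e2, one_smul]
    abel
  rw [hQ, det_smul, det_transpose, hdet, mul_zero]
end

section
/- Let Γ0, Γ1, Σ : ℝ → (real d×d matrices) be functions differentiable at a point t₀, with Σ(t) symmetric and invertible for all t in a neighborhood of t₀, and suppose Γ0(t) = Σ(t) + Γ1(t) Σ(t)⁻¹ Γ1(t)ᵀ holds in this neighborhood. Define B(t) = −Γ1(t) Σ(t)⁻¹ and write Σ̇, Γ̇0, Γ̇1 for the derivatives at t₀ and B = B(t₀). Then Σ̇ − B Σ̇ Bᵀ = Γ̇0 + Γ̇1 Bᵀ + B Γ̇1ᵀ. -/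
/-!
Differentiate the moment equation by the product rule. Since
`(Σ⁻¹)˙ = -Σ⁻¹ Σ̇ Σ⁻¹` and, by symmetry of `Σ`, `Bᵀ = -Σ⁻¹ Γ1ᵀ`, the derivative of the
right-hand side is `Σ̇ - Γ̇1 Bᵀ - B Σ̇ Bᵀ - B Γ̇1ᵀ`; uniqueness of derivatives gives the claim.

The product and inverse rules need a submultiplicative norm, which the entrywise sup norm is not.
They are taken from the `ℓ∞` operator norm, and this is harmless because both norms
induce the product topology and `HasDerivAt` depends on the topology alone.
-/

open Matrix

section

attribute [local instance] Matrix.linftyOpNormedRing Matrix.linftyOpNormedAlgebra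

/-- Product and inverse rules for the moment map, with derivatives taken entrywise so that the
statement is independent of the choice of matrix norm. -/
lemma hasDerivAt_moment_entry {d : ℕ} {t₀ : ℝ}
    {G S : ℝ → Matrix (Fin d) (Fin d) ℝ} {G' S' : Matrix (Fin d) (Fin d) ℝ}
    (hG : ∀ i j, HasDerivAt (fun t => G t i j) (G' i j) t₀)
    (hS : ∀ i j, HasDerivAt (fun t => S t i j) (S' i j) t₀)
    (hu : IsUnit (S t₀).det) (i j : Fin d) :
    HasDerivAt (fun t => (S t + G t * (S t)⁻¹ * (G t)ᵀ) i j)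
      ((S' + ((G' * (S t₀)⁻¹ + G t₀ * (-((S t₀)⁻¹ * S' * (S t₀)⁻¹))) * (G t₀)ᵀ
        + G t₀ * (S t₀)⁻¹ * G'ᵀ)) i j) t₀ := by
  have entry : ∀ {F : ℝ → Matrix (Fin d) (Fin d) ℝ} {F' : Matrix (Fin d) (Fin d) ℝ},
      HasDerivAt F F' t₀ ↔ ∀ i j, HasDerivAt (fun t => F t i j) (F' i j) t₀ :=
    (hasDerivAt_pi (E' := fun _ => Fin d → ℝ)).trans (forall_congr' fun i => hasDerivAt_pi)
  have hGm : HasDerivAt G G' t₀ := entry.2 hG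
  have hSm : HasDerivAt S S' t₀ := entry.2 hS
  have hGt : HasDerivAt (fun t => (G t)ᵀ) G'ᵀ t₀ := entry.2 fun i j => hG j i
  obtain ⟨u, hu'⟩ := (Matrix.isUnit_iff_isUnit_det _).2 hu
  have hinv : HasDerivAt (fun t => (S t)⁻¹) (-((S t₀)⁻¹ * S' * (S t₀)⁻¹)) t₀ := by
    have h := hasFDerivAt_ringInverse (𝕜 := ℝ) u
    rw [hu'] at h
    have h2 := h.comp_hasDerivAt t₀ hSm
    have h3 : (↑u⁻¹ : Matrix (Fin d) (Fin d) ℝ) = (S t₀)⁻¹ := by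
      rw [← hu', Matrix.coe_units_inv]
    simp [Function.comp_def, ← Matrix.nonsing_inv_eq_ringInverse, h3] at h2
    exact h2
  exact entry.1 (hSm.add ((hGm.mul hinv).mul hGt)) i j

end

attribute [local instance] Matrix.normedAddCommGroup Matrix.normedSpace

/-- Differentiating the moment equation `Γ0 = Σ + Γ1 Σ⁻¹ Γ1ᵀ` with `B = −Γ1 Σ⁻¹` yields
the discrete-time Lyapunov equation `Σ̇ − B Σ̇ Bᵀ = Γ̇0 + Γ̇1 Bᵀ + B Γ̇1ᵀ`. -/
theorem lyapunov_equation_for_sigma_dot (d : ℕ) (t₀ : ℝ)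
    (Γ0 Γ1 S : ℝ → Matrix (Fin d) (Fin d) ℝ)
    (Γ0' Γ1' S' : Matrix (Fin d) (Fin d) ℝ)
    (hΓ0 : HasDerivAt Γ0 Γ0' t₀) (hΓ1 : HasDerivAt Γ1 Γ1' t₀)
    (hS : HasDerivAt S S' t₀)
    (hnbd : ∀ᶠ t in nhds t₀,
      (S t).IsSymm ∧ IsUnit (S t).det ∧ Γ0 t = S t + Γ1 t * (S t)⁻¹ * (Γ1 t)ᵀ)
    (B : Matrix (Fin d) (Fin d) ℝ) (hB : B = -(Γ1 t₀ * (S t₀)⁻¹)) :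
    S' - B * S' * Bᵀ = Γ0' + Γ1' * Bᵀ + B * Γ1'ᵀ := by
  obtain ⟨hsym, hu, -⟩ := hnbd.self_of_nhds
  have entry : ∀ {F : ℝ → Matrix (Fin d) (Fin d) ℝ} {F' : Matrix (Fin d) (Fin d) ℝ},
      HasDerivAt F F' t₀ → ∀ i j, HasDerivAt (fun t => F t i j) (F' i j) t₀ :=
    fun h i j => hasDerivAt_pi.1 (hasDerivAt_pi.1 h i) j
  have key : Γ0' = S' + ((Γ1' * (S t₀)⁻¹ + Γ1 t₀ * (-((S t₀)⁻¹ * S' * (S t₀)⁻¹))) * (Γ1 t₀)ᵀ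
      + Γ1 t₀ * (S t₀)⁻¹ * Γ1'ᵀ) := by
    ext i j
    refine (entry hΓ0 i j).unique
      ((hasDerivAt_moment_entry (entry hΓ1) (entry hS) hu i j).congr_of_eventuallyEq ?_)
    filter_upwards [hnbd] with t ht
    rw [ht.2.2]
  have hBt : Bᵀ = -((S t₀)⁻¹ * (Γ1 t₀)ᵀ) := by
    rw [hB, transpose_neg, transpose_mul, transpose_nonsing_inv, hsym.eq]
  rw [hBt, hB, key]
  noncomm_ring
end
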